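/- Let σ be the unique zero of the function f(z) = sin(z) − z·cos(z) in the interval (π, 3π/2) (numerically σ ≈ 4.493409458). Then for every real number k > 1 and every x ∈ [0, σ/k], one has sin((k−1)x) − ((k−1)/k)·sin(kx) ≥ 0. -/

import Mathlib

open Real

/-!
Since `t * sinc t = sin t`, the quantity to bound equals
`(k - 1) * x * (sinc ((k - 1) * x) - sinc (k * x))`, so it suffices that `sinc` decreases on
`[0, σ]`. Its derivative has the sign of `-(sin t - t * cos t)`, and `sin t - t * cos t`, whose own
derivative is `t * sin t`, increases on `[0, π]` and decreases on `[π, 2π]`. Starting from `0` at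
`t = 0`, it therefore stays nonnegative until its zero `σ`.
-/

lemma hasDerivAt_sin_sub_mul_cos (t : ℝ) :
    HasDerivAt (fun t ↦ sin t - t * cos t) (t * sin t) t :=
  ((hasDerivAt_sin t).sub ((hasDerivAt_id' t).mul (hasDerivAt_cos t))).congr_deriv (by ring)

lemma monotoneOn_sin_sub_mul_cos : MonotoneOn (fun t ↦ sin t - t * cos t) (Set.Icc 0 π) := by
  refine monotoneOn_of_hasDerivWithinAt_nonneg (convex_Icc 0 π) (by fun_prop)
    (fun t _ ↦ (hasDerivAt_sin_sub_mul_cos t).hasDerivWithinAt) fun t ht ↦ ?_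
  have ht : t ∈ Set.Icc 0 π := interior_subset ht
  exact mul_nonneg ht.1 (sin_nonneg_of_mem_Icc ht)

lemma antitoneOn_sin_sub_mul_cos :
    AntitoneOn (fun t ↦ sin t - t * cos t) (Set.Icc π (2 * π)) := by
  refine antitoneOn_of_hasDerivWithinAt_nonpos (convex_Icc π (2 * π)) (by fun_prop)
    (fun t _ ↦ (hasDerivAt_sin_sub_mul_cos t).hasDerivWithinAt) fun t ht ↦ ?_
  obtain ⟨hπt, ht2π⟩ : t ∈ Set.Icc π (2 * π) := interior_subset ht
  have hsin : sin t ≤ 0 := by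
    rw [← sin_sub_two_pi]
    exact sin_nonpos_of_nonpos_of_neg_pi_le (by linarith) (by linarith)
  exact mul_nonpos_of_nonneg_of_nonpos (pi_pos.le.trans hπt) hsin

lemma sin_sub_mul_cos_nonneg {b t : ℝ} (hb : b ≤ 2 * π) (hb₀ : 0 ≤ sin b - b * cos b)
    (ht : t ∈ Set.Icc 0 b) : 0 ≤ sin t - t * cos t := by
  rcases le_total t π with htπ | hπt
  · simpa using monotoneOn_sin_sub_mul_cos ⟨le_rfl, pi_pos.le⟩ ⟨ht.1, htπ⟩ ht.1
  · exact hb₀.trans <|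
      antitoneOn_sin_sub_mul_cos ⟨hπt, ht.2.trans hb⟩ ⟨hπt.trans ht.2, hb⟩ ht.2

lemma mul_sinc (t : ℝ) : t * sinc t = sin t := by
  rcases eq_or_ne t 0 with rfl | ht
  · simp
  · rw [sinc_of_ne_zero ht, mul_div_cancel₀ _ ht]

lemma hasDerivAt_sinc {t : ℝ} (ht : t ≠ 0) :
    HasDerivAt sinc (-(sin t - t * cos t) / t ^ 2) t := by
  have hdiv : HasDerivAt (fun s ↦ sin s / s) (-(sin t - t * cos t) / t ^ 2) t :=
    ((hasDerivAt_sin t).div (hasDerivAt_id' t) ht).congr_deriv (by ring)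
  refine hdiv.congr_of_eventuallyEq ?_
  filter_upwards [eventually_ne_nhds ht] with s hs using sinc_of_ne_zero hs

lemma antitoneOn_sinc {b : ℝ} (hb : b ≤ 2 * π) (hb₀ : 0 ≤ sin b - b * cos b) :
    AntitoneOn sinc (Set.Icc 0 b) := by
  refine antitoneOn_of_hasDerivWithinAt_nonpos (convex_Icc 0 b) continuous_sinc.continuousOn
    (fun t ht ↦ (hasDerivAt_sinc ?_).hasDerivWithinAt) fun t ht ↦ ?_
  · rw [interior_Icc] at ht
    exact ht.1.ne'
  · have hnonneg : 0 ≤ sin t - t * cos t := sin_sub_mul_cos_nonneg hb hb₀ (interior_subset ht)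
    exact div_nonpos_of_nonpos_of_nonneg (neg_nonpos.2 hnonneg) (sq_nonneg t)

lemma sin_sub_div_mul_sin_eq_mul_sinc_sub_sinc {k : ℝ} (hk : k ≠ 0) (x : ℝ) :
    sin ((k - 1) * x) - (k - 1) / k * sin (k * x) =
      (k - 1) * x * (sinc ((k - 1) * x) - sinc (k * x)) := by
  rw [← mul_sinc ((k - 1) * x), ← mul_sinc (k * x)]
  field_simp

theorem theta_nonneg
    (σ : ℝ) (hσ : σ ∈ Set.Ioo Real.pi (3 * Real.pi / 2))
    (hzero : Real.sin σ - σ * Real.cos σ = 0)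
    (huniq : ∀ z ∈ Set.Ioo Real.pi (3 * Real.pi / 2),
      Real.sin z - z * Real.cos z = 0 → z = σ)
    (k : ℝ) (hk : 1 < k) (x : ℝ) (hx : x ∈ Set.Icc 0 (σ / k)) :
    0 ≤ Real.sin ((k - 1) * x) - (k - 1) / k * Real.sin (k * x) := by
  have hk₀ : 0 < k := one_pos.trans hk
  have hσ_le : σ ≤ 2 * π := by linarith [hσ.2, pi_pos]
  have hkx : k * x ≤ σ := (le_div_iff₀' hk₀).1 hx.2
  have hleft : 0 ≤ (k - 1) * x := mul_nonneg (sub_nonneg.2 hk.le) hx.1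
  have hle : (k - 1) * x ≤ k * x := by linarith [hx.1]
  have hsinc : sinc (k * x) ≤ sinc ((k - 1) * x) :=
    antitoneOn_sinc hσ_le hzero.ge ⟨hleft, hle.trans hkx⟩ ⟨hleft.trans hle, hkx⟩ hle
  rw [sin_sub_div_mul_sin_eq_mul_sinc_sub_sinc hk₀.ne']
  exact mul_nonneg hleft (sub_nonneg.2 hsinc)
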